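/- Let F be an infinite field and n a natural number. Consider the polynomial algebra F[x_{ij} : 1 ≤ i,j ≤ n] (the coordinate ring of the space Mat_n(F) of n×n matrices), on which GL_n(F) acts by F-algebra automorphisms through conjugation of the generic matrix (g · f is the polynomial obtained from f by the linear substitution replacing the matrix of variables X = (x_{ij}) by g^{−1} X g). Then the invariant subalgebra F[x_{ij}]^{GL_n(F)} is isomorphic as an F-algebra to the algebra F[y_1, …, y_n]^{S_n} of symmetric polynomials in n variables, the isomorphism being induced by restriction to diagonal matrices (the substitution x_{ii} ↦ y_i, x_{ij} ↦ 0 for i ≠ j). -/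

import Mathlib

universe u

namespace SymmetricProduct

variable (F : Type u) [CommRing F]

/-- The subalgebra of elements fixed by a family of algebra endomorphisms. -/
def fixedSubalgebra {V : Type*} [CommRing V] [Algebra F V] {G : Type*}
    (σ : G → (V →ₐ[F] V)) : Subalgebra F V where
  carrier := {v | ∀ g : G, σ g v = v}
  mul_mem' := fun hx hy g => by rw [_root_.map_mul, hx g, hy g]
  add_mem' := fun hx hy g => by rw [_root_.map_add, hx g, hy g]
  one_mem' := fun g => map_one _
  algebraMap_mem' := fun r g => AlgHom.commutes _ r

variable (n : ℕ)

/-- The action of `GL_n(F)` on the coordinate ring `F[x_{ij}]` of `Mat_n`, by conjugation of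
the generic matrix: `g · f` is obtained from `f` by substituting `X ↦ g⁻¹ X g`. -/
noncomputable def conjAct (g : GL (Fin n) F) :
    MvPolynomial (Fin n × Fin n) F →ₐ[F] MvPolynomial (Fin n × Fin n) F :=
  MvPolynomial.aeval (fun p : Fin n × Fin n =>
    ∑ k : Fin n, ∑ l : Fin n,
      MvPolynomial.C (((g⁻¹ : GL (Fin n) F) : Matrix (Fin n) (Fin n) F) p.1 k
          * (g : Matrix (Fin n) (Fin n) F) l p.2) * MvPolynomial.X (k, l))

/-- Restriction to diagonal matrices: the substitution `x_{ii} ↦ y_i`, `x_{ij} ↦ 0` for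
`i ≠ j`. -/
noncomputable def restrictDiag :
    MvPolynomial (Fin n × Fin n) F →ₐ[F] MvPolynomial (Fin n) F :=
  MvPolynomial.aeval (fun p : Fin n × Fin n =>
    if p.1 = p.2 then MvPolynomial.X p.1 else 0)

/-!
The coefficients of the characteristic polynomial of the generic matrix are invariant and restrict,
up to sign, to the elementary symmetric polynomials; conversely, conjugating by permutation matrices
shows that an invariant restricts to a symmetric polynomial.

For injectivity, an invariant `f` satisfies `f (A * B) = f (B * A)` for matrices over every
commutative `F`-algebra: it does so whenever `A` is invertible over `F`, and such `A` are Zariski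
dense because `F` is infinite. The characteristic polynomial of the generic matrix is separable, so
over an algebraic closure this matrix has the form `P * diagonal d * P⁻¹`, and there `f` takes the
value `f (diagonal d)`, which depends only on the restriction of `f` to diagonal matrices.
-/

section

open MvPolynomial

variable {F n}

section Evaluation

variable {m : Type*} {R S : Type*} [CommRing R] [Algebra F R] [CommRing S] [Algebra F S]

variable (F) in
/-- The value at the matrix `A` of a polynomial function on square matrices, that is, of an element
of the coordinate ring `F[x_{ij}]`. The entries of `A` may lie in any commutative `F`-algebra, so
that substitutions into the generic matrix are evaluations as well. -/
noncomputable def evalMatrix (A : Matrix m m R) : MvPolynomial (m × m) F →ₐ[F] R :=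
  aeval fun p => A p.1 p.2

@[simp]
lemma evalMatrix_X (A : Matrix m m R) (p : m × m) : evalMatrix F A (X p) = A p.1 p.2 :=
  aeval_X _ _

lemma evalMatrix_mvPolynomialX (f : MvPolynomial (m × m) F) :
    evalMatrix F (Matrix.mvPolynomialX m m F) f = f :=
  aeval_X_left_apply f

variable [Fintype m] [DecidableEq m]

lemma map_evalMatrix (φ : R →ₐ[F] S) (A : Matrix m m R) (f : MvPolynomial (m × m) F) :
    φ (evalMatrix F A f) = evalMatrix F (φ.mapMatrix A) f :=
  DFunLike.congr_fun (f := φ.comp (evalMatrix F A)) (by ext p; simp) f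

lemma evalMatrix_map_mvPolynomialX (φ : MvPolynomial (m × m) F →ₐ[F] R) :
    evalMatrix F (φ.mapMatrix (Matrix.mvPolynomialX m m F)) = φ := by
  ext p
  simp

lemma evalMatrix_charpoly_univ_coeff (A : Matrix m m R) (k : ℕ) :
    evalMatrix F A ((Matrix.charpoly.univ F m).coeff k) = A.charpoly.coeff k :=
  Matrix.charpoly.univ_coeff_eval₂Hom m (algebraMap F R) (fun p => A p.1 p.2) k

end Evaluation

section Invariants

variable {R : Type*} [CommRing R] [Algebra F R] {f : MvPolynomial (Fin n × Fin n) F}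

lemma evalMatrix_conjAct (g : GL (Fin n) F) (A : Matrix (Fin n) (Fin n) R)
    (f : MvPolynomial (Fin n × Fin n) F) :
    evalMatrix F A (conjAct F n g f) =
      evalMatrix F ((g⁻¹.map (algebraMap F R)).val * A * (g.map (algebraMap F R)).val) f := by
  refine DFunLike.congr_fun (f := (evalMatrix F A).comp (conjAct F n g)) ?_ f
  ext p
  simp only [conjAct, AlgHom.comp_apply, aeval_X, evalMatrix_X, map_sum, map_mul, algHom_C,
    Matrix.mul_apply, Finset.sum_mul, Matrix.GeneralLinearGroup.map_apply]
  rw [Finset.sum_comm]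
  exact Finset.sum_congr rfl fun l _ => Finset.sum_congr rfl fun k _ => by ring

lemma evalMatrix_conj (hf : f ∈ fixedSubalgebra F (conjAct F n)) (g : GL (Fin n) F)
    (A : Matrix (Fin n) (Fin n) R) :
    evalMatrix F ((g⁻¹.map (algebraMap F R)).val * A * (g.map (algebraMap F R)).val) f =
      evalMatrix F A f := by
  rw [← evalMatrix_conjAct, hf g]

lemma evalMatrix_val_mul_comm (hf : f ∈ fixedSubalgebra F (conjAct F n)) (g : GL (Fin n) F)
    (B : Matrix (Fin n) (Fin n) F) :
    evalMatrix F (g.val * B) f = evalMatrix F (B * g.val) f := by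
  have conj_inv_mul : (g⁻¹.map (algebraMap F F)).val * (g.val * B) *
      (g.map (algebraMap F F)).val = B * g.val :=
    congrArg (· * g.val) (Units.inv_mul_cancel_left g B)
  rw [← conj_inv_mul, evalMatrix_conj hf]

lemma charpoly_univ_coeff_mem_fixedSubalgebra (k : ℕ) :
    (Matrix.charpoly.univ F (Fin n)).coeff k ∈ fixedSubalgebra F (conjAct F n) := by
  intro g
  rw [← evalMatrix_mvPolynomialX (conjAct F n g _), evalMatrix_conjAct,
    evalMatrix_charpoly_univ_coeff, map_inv, Matrix.coe_units_inv, Matrix.charpoly_units_conj']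

lemma aeval_restrictDiag (d : Fin n → R) (f : MvPolynomial (Fin n × Fin n) F) :
    aeval d (restrictDiag F n f) = evalMatrix F (Matrix.diagonal d) f := by
  refine DFunLike.congr_fun (f := (aeval d).comp (restrictDiag F n)) ?_ f
  ext p
  simp [restrictDiag, Matrix.diagonal_apply, apply_ite (aeval d)]

lemma restrictDiag_eq_evalMatrix (f : MvPolynomial (Fin n × Fin n) F) :
    restrictDiag F n f = evalMatrix F (Matrix.diagonal X) f := by
  rw [← aeval_restrictDiag, aeval_X_left_apply]

end Invariants

section Image

lemma permMatrix_mul_diagonal_mul_permMatrix_inv {m R : Type*} [Fintype m] [DecidableEq m]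
    [CommRing R] (σ : Equiv.Perm m) (d : m → R) :
    σ.permMatrix R * Matrix.diagonal d * σ⁻¹.permMatrix R = Matrix.diagonal (d ∘ σ) := by
  rw [PEquiv.toMatrix_toPEquiv_mul, PEquiv.mul_toMatrix_toPEquiv, Matrix.submatrix_submatrix]
  exact Matrix.submatrix_diagonal_equiv d σ

lemma isSymmetric_restrictDiag {f : MvPolynomial (Fin n × Fin n) F}
    (hf : f ∈ fixedSubalgebra F (conjAct F n)) : (restrictDiag F n f).IsSymmetric := by
  intro σ
  let g : GL (Fin n) F := Matrix.permMatrixHom.toHomUnits σ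
  have hg : (g.map (algebraMap F (MvPolynomial (Fin n) F))).val = σ⁻¹.permMatrix _ :=
    PEquiv.map_toMatrix _ _
  have hg_inv : (g⁻¹.map (algebraMap F (MvPolynomial (Fin n) F))).val = σ.permMatrix _ :=
    PEquiv.map_toMatrix _ _
  calc rename σ (restrictDiag F n f)
      = evalMatrix F (Matrix.diagonal (X ∘ σ)) f := by
        rw [rename_eq_aeval, aeval_restrictDiag]
    _ = evalMatrix F (Matrix.diagonal X) f := by
        rw [← permMatrix_mul_diagonal_mul_permMatrix_inv, ← hg, ← hg_inv, evalMatrix_conj hf]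
    _ = restrictDiag F n f := (restrictDiag_eq_evalMatrix f).symm

lemma charpoly_diagonal_X_coeff {m : Type*} [Fintype m] [DecidableEq m] {i : ℕ}
    (hi : i ≤ Fintype.card m) :
    (Matrix.diagonal (X : m → MvPolynomial m F)).charpoly.coeff (Fintype.card m - i) =
      (-1) ^ i * esymm m F i := by
  have vieta := Multiset.prod_X_sub_C_coeff
    ((Finset.univ : Finset m).val.map (X : m → MvPolynomial m F))
    (k := Fintype.card m - i) (by simp)
  rw [Multiset.map_map, Multiset.card_map, Finset.card_val, Finset.card_univ,
    Nat.sub_sub_self hi, ← esymm_eq_multiset_esymm] at vieta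
  rw [Matrix.charpoly_diagonal]
  exact vieta

lemma esymm_mem_map_restrictDiag {i : ℕ} (hi : i ≤ n) :
    esymm (Fin n) F i ∈ (fixedSubalgebra F (conjAct F n)).map (restrictDiag F n) := by
  have coeff_mem : (-1) ^ i * esymm (Fin n) F i ∈
      (fixedSubalgebra F (conjAct F n)).map (restrictDiag F n) := by
    refine ⟨_, charpoly_univ_coeff_mem_fixedSubalgebra (n - i), ?_⟩
    rw [RingHom.coe_coe, restrictDiag_eq_evalMatrix, evalMatrix_charpoly_univ_coeff]
    simpa using charpoly_diagonal_X_coeff (F := F) (hi.trans_eq (Fintype.card_fin n).symm)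
  have sign_mem := pow_mem (neg_mem (one_mem
    ((fixedSubalgebra F (conjAct F n)).map (restrictDiag F n)))) i
  simpa [← mul_assoc, ← mul_pow] using mul_mem sign_mem coeff_mem

lemma symmetricSubalgebra_le_of_esymm_mem {σ : Type*} [Fintype σ]
    {S : Subalgebra F (MvPolynomial σ F)} (hS : ∀ i ≤ Fintype.card σ, esymm σ F i ∈ S) :
    symmetricSubalgebra σ F ≤ S := by
  intro p hp
  obtain ⟨q, hq⟩ := esymmAlgHom_surjective F le_rfl ⟨p, hp⟩
  have hpq : aeval (fun i : Fin (Fintype.card σ) => esymm σ F (i + 1)) q = p := by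
    rw [← esymmAlgHom_apply, hq]
  rw [← hpq]
  exact (S.mvPolynomial_aeval_coe (fun i => ⟨_, hS _ i.2⟩) q).symm ▸ Subtype.property _

theorem map_restrictDiag_fixedSubalgebra :
    (fixedSubalgebra F (conjAct F n)).map (restrictDiag F n) =
      symmetricSubalgebra (Fin n) F := by
  refine le_antisymm ?_ (symmetricSubalgebra_le_of_esymm_mem fun i hi =>
    esymm_mem_map_restrictDiag (hi.trans_eq (Fintype.card_fin n)))
  rintro _ ⟨f, hf, rfl⟩
  exact isSymmetric_restrictDiag hf

end Image

section Density

lemma eq_of_eval_eq_of_eval_ne_zero {σ R : Type*} [CommRing R] [IsDomain R] [Infinite R]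
    {p q s : MvPolynomial σ R} (hs : s ≠ 0) (h : ∀ x, eval x s ≠ 0 → eval x p = eval x q) :
    p = q := by
  refine mul_left_cancel₀ hs (MvPolynomial.funext fun x => ?_)
  rw [map_mul, map_mul, mul_eq_mul_left_iff]
  exact (em' _).imp_left (h x)

variable {k : Type*} [Field k] [Infinite k] {f : MvPolynomial (Fin n × Fin n) k}

lemma evalMatrix_mul_comm (hf : f ∈ fixedSubalgebra k (conjAct k n)) {R : Type*} [CommRing R]
    [Algebra k R] (A B : Matrix (Fin n) (Fin n) R) :
    evalMatrix k (A * B) f = evalMatrix k (B * A) f := by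
  let Y := Matrix.mvPolynomialX (Fin n) (Fin n) k
  let P := (rename (R := k) (Sum.inl : _ → (Fin n × Fin n) ⊕ (Fin n × Fin n))).mapMatrix Y
  let Q := (rename (R := k) (Sum.inr : _ → (Fin n × Fin n) ⊕ (Fin n × Fin n))).mapMatrix Y
  have hdet : P.det ≠ 0 := by
    rw [← AlgHom.map_det]
    exact (map_ne_zero_iff _ (rename_injective _ Sum.inl_injective)).2
      (Matrix.det_mvPolynomialX_ne_zero _ _)
  have generic : evalMatrix k (P * Q) f = evalMatrix k (Q * P) f := by
    refine eq_of_eval_eq_of_eval_ne_zero hdet fun x hx => ?_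
    rw [← aeval_eq_eval] at hx ⊢
    rw [AlgHom.map_det] at hx
    rw [map_evalMatrix, map_evalMatrix, map_mul, map_mul]
    exact evalMatrix_val_mul_comm hf (Matrix.GeneralLinearGroup.mkOfDetNeZero _ hx) _
  let φ := aeval (R := k) (Sum.elim (fun p : Fin n × Fin n => A p.1 p.2)
    fun p : Fin n × Fin n => B p.1 p.2)
  have hP : φ.mapMatrix P = A := by ext i j; simp [P, Y, φ]
  have hQ : φ.mapMatrix Q = B := by ext i j; simp [Q, Y, φ]
  simpa only [map_evalMatrix, map_mul, hP, hQ] using congrArg φ generic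

lemma evalMatrix_eq_aeval_restrictDiag (hf : f ∈ fixedSubalgebra k (conjAct k n)) {R : Type*}
    [CommRing R] [Algebra k R] (P : GL (Fin n) R) (d : Fin n → R) :
    evalMatrix k (P.val * Matrix.diagonal d * P⁻¹.val) f = aeval d (restrictDiag k n f) := by
  rw [mul_assoc, evalMatrix_mul_comm hf, mul_assoc, Units.inv_mul, mul_one, aeval_restrictDiag]

end Density

section Diagonalization

open Polynomial (resultant derivative)

lemma map_resultant_derivative_ne_zero_iff {R L : Type*} [CommRing R] [Field L]
    (φ : R →+* L) {χ : Polynomial R} (hχ : χ.Monic) :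
    φ (resultant χ (derivative χ)) ≠ 0 ↔ (χ.map φ).Separable := by
  have : Nontrivial R := φ.domain_nontrivial
  -- The degree of `derivative χ` may drop by `j` under `φ`, which does not affect the resultant
  -- because `χ` is monic.
  obtain ⟨j, hj⟩ := Nat.exists_eq_add_of_le
    (Polynomial.natDegree_map_le (f := φ) (p := derivative χ))
  rw [← Polynomial.resultant_map_map, ← hχ.natDegree_map φ, hj,
    Polynomial.resultant_add_right_deg _ _ _ _ _ le_rfl, (hχ.map φ).coeff_natDegree, one_pow,
    one_mul, Polynomial.separable_def, ← Polynomial.derivative_map,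
    ← Polynomial.isUnit_resultant_iff_isCoprime (hχ.map φ), isUnit_iff_ne_zero]

lemma separable_map_of_injective {R K L : Type*} [CommRing R] [Field K] [Field L]
    {φ : R →+* K} (hφ : Function.Injective φ) {χ : Polynomial R} (hχ : χ.Monic) {ψ : R →+* L}
    (h : (χ.map ψ).Separable) : (χ.map φ).Separable := by
  rw [← map_resultant_derivative_ne_zero_iff _ hχ] at h ⊢
  exact (map_ne_zero_iff φ hφ).2 fun h0 => h (by rw [h0, map_zero])

variable {m : Type*} [Fintype m] [DecidableEq m]

lemma map_charpoly_univ {R : Type*} [CommRing R] [Algebra F R]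
    (φ : MvPolynomial (m × m) F →ₐ[F] R) :
    (Matrix.charpoly.univ F m).map (φ : MvPolynomial (m × m) F →+* R) =
      (φ.mapMatrix (Matrix.mvPolynomialX m m F)).charpoly :=
  (Matrix.charpoly_map _ _).symm

lemma charpoly_mapMatrix_mvPolynomialX_separable [IsDomain F] {K : Type*} [Field K] [Algebra F K]
    {φ : MvPolynomial (m × m) F →ₐ[F] K} (hφ : Function.Injective φ) :
    (φ.mapMatrix (Matrix.mvPolynomialX m m F)).charpoly.Separable := by
  let L := FractionRing (MvPolynomial m F)
  let d : m → L := fun i => algebraMap (MvPolynomial m F) L (X i)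
  have hd : Function.Injective d :=
    (IsFractionRing.injective (MvPolynomial m F) L).comp X_injective
  -- The matrix `diagonal d` is a specialization of the generic matrix with distinct eigenvalues.
  have hdiag : (evalMatrix F (Matrix.diagonal d)).mapMatrix (Matrix.mvPolynomialX m m F) =
      Matrix.diagonal d :=
    Matrix.mvPolynomialX_mapMatrix_aeval F _
  have hsep : ((Matrix.charpoly.univ F m).map
      (evalMatrix F (Matrix.diagonal d) : MvPolynomial (m × m) F →+* L)).Separable := by
    rw [map_charpoly_univ, hdiag, Matrix.charpoly_diagonal]
    exact Polynomial.separable_prod_X_sub_C_iff.2 hd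
  rw [← map_charpoly_univ]
  exact separable_map_of_injective hφ (Matrix.charpoly.univ_monic F m) hsep

lemma exists_eq_mul_diagonal_mul_inv {K : Type*} [Field K] (M : Matrix m m K)
    (hsplits : M.charpoly.Splits) (hsep : M.charpoly.Separable) :
    ∃ (P : GL m K) (d : m → K), M = P.val * Matrix.diagonal d * P⁻¹.val := by
  classical
  have hcard : Fintype.card m = Fintype.card M.charpoly.roots.toFinset := by
    rw [Fintype.card_coe, Multiset.toFinset_card_of_nodup (Polynomial.nodup_roots hsep),
      ← hsplits.natDegree_eq_card_roots, Matrix.charpoly_natDegree_eq_dim]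
  let e := Fintype.equivOfCardEq hcard
  have eigenvalue (i : m) : Module.End.HasEigenvalue (Matrix.toLin' M) (e i) := by
    rw [Module.End.hasEigenvalue_iff_isRoot_charpoly, Matrix.charpoly_toLin']
    exact Polynomial.isRoot_of_mem_roots (Multiset.mem_toFinset.1 (e i).2)
  choose v hv using fun i => (eigenvalue i).exists_hasEigenvector
  have hunit : IsUnit (Matrix.of v).transpose := by
    rw [← Matrix.linearIndependent_cols_iff_isUnit]
    exact Module.End.eigenvectors_linearIndependent' _ _
      (Subtype.val_injective.comp e.injective) v hv
  obtain ⟨P, hP⟩ := hunit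
  refine ⟨P, fun i => e i, (Units.eq_mul_inv_iff_mul_eq P).2 ?_⟩
  ext i j
  rw [hP, Matrix.mul_diagonal, mul_comm]
  exact congrFun (hv j).apply_eq_smul i

end Diagonalization

section Injectivity

lemma exists_injective_algHom_isAlgClosed (A : Type*) [CommRing A] (R : Type u) [CommRing R]
    [IsDomain R] [Algebra A R] :
    ∃ (K : Type u) (_ : Field K) (_ : IsAlgClosed K) (_ : Algebra A K) (ι : R →ₐ[A] K),
      Function.Injective ι := by
  let L := FractionRing R
  let K := AlgebraicClosure L
  refine ⟨K, inferInstance, inferInstance, inferInstance, IsScalarTower.toAlgHom A R K, ?_⟩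
  rw [IsScalarTower.coe_toAlgHom', IsScalarTower.algebraMap_eq R L K]
  exact (algebraMap L K).injective.comp (IsFractionRing.injective R L)

variable {k : Type*} [Field k] [Infinite k]

lemma exists_apply_eq_aeval_restrictDiag {K : Type*} [Field K] [IsAlgClosed K] [Algebra k K]
    {ι : MvPolynomial (Fin n × Fin n) k →ₐ[k] K} (hι : Function.Injective ι) :
    ∃ d : Fin n → K, ∀ f ∈ fixedSubalgebra k (conjAct k n),
      ι f = aeval d (restrictDiag k n f) := by
  obtain ⟨P, d, hPd⟩ := exists_eq_mul_diagonal_mul_inv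
    (ι.mapMatrix (Matrix.mvPolynomialX (Fin n) (Fin n) k)) (IsAlgClosed.splits _)
    (charpoly_mapMatrix_mvPolynomialX_separable hι)
  refine ⟨d, fun f hf => ?_⟩
  rw [← evalMatrix_eq_aeval_restrictDiag hf P, ← hPd, evalMatrix_map_mvPolynomialX]

theorem restrictDiag_injOn_fixedSubalgebra :
    Set.InjOn (restrictDiag k n) (fixedSubalgebra k (conjAct k n)) := by
  obtain ⟨K, _, _, _, ι, hι⟩ :=
    exists_injective_algHom_isAlgClosed k (MvPolynomial (Fin n × Fin n) k)
  obtain ⟨d, hd⟩ := exists_apply_eq_aeval_restrictDiag hι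
  intro f hf g hg hfg
  exact hι (by rw [hd f hf, hd g hg, hfg])

end Injectivity

end

/-- **Classical invariant theory of conjugation.** Over an infinite field `F`, restriction
to diagonal matrices induces an `F`-algebra isomorphism from the conjugation invariants
`F[x_{ij}]^{GL_n(F)}` onto the algebra `F[y_1, …, y_n]^{S_n}` of symmetric polynomials. -/
theorem invariants_iso_symmetricPolynomials (F : Type u) [Field F] [Infinite F] (n : ℕ) :
    Subalgebra.map (restrictDiag F n) (fixedSubalgebra F (conjAct F n))
        = MvPolynomial.symmetricSubalgebra (Fin n) F ∧
      Set.InjOn (restrictDiag F n) (fixedSubalgebra F (conjAct F n)) :=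
  ⟨map_restrictDiag_fixedSubalgebra, restrictDiag_injOn_fixedSubalgebra⟩

end SymmetricProduct
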